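/- Let 𝔽 be a field and F₀, F₁, F₂ ∈ 𝔽 with F₀ ≠ 0 and F₂ ≠ 0. For k ≥ 0 let 𝓕_k be the (k+1)×(k+3) matrix whose i-th row (1 ≤ i ≤ k+1) is (0,…,0,F₀,F₁,F₂,0,…,0) with F₀ in column i, and for m ≥ 0 let d_m be the determinant of the (m+1)×(m+1) Toeplitz matrix with F₁ on the diagonal, F₂ on the superdiagonal and F₀ on the subdiagonal. If d_m ≠ 0 for all 0 ≤ m ≤ k, then every nonzero 𝔽-linear combination of the rows of 𝓕_k has Hamming weight at least 3; that is, 𝓕_k generates an MDS linear block code of length k+3 and dimension k+1. -/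

import Mathlib

open Polynomial

/-- The weight of a vector of polynomials: the total number of nonzero coefficients. -/
noncomputable def polyWeight {F : Type*} [Field F] {n : ℕ} (c : Fin n → Polynomial F) : ℕ :=
  ∑ j, (c j).support.card

/-- The free distance of a submodule of `𝔽[z]ⁿ`: the minimal weight of a nonzero element. -/
noncomputable def freeDist {F : Type*} [Field F] {n : ℕ}
    (C : Submodule (Polynomial F) (Fin n → Polynomial F)) : ℕ :=
  sInf {d | ∃ c ∈ C, c ≠ 0 ∧ polyWeight c = d}

/-- The Hamming weight of a vector. -/
noncomputable def hammingWt {F : Type*} [Field F] {n : ℕ} (v : Fin n → F) : ℕ :=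
  Set.ncard {j | v j ≠ 0}

/-- The minimum distance of a linear block code. -/
noncomputable def minDist {F : Type*} [Field F] {n : ℕ} (C : Submodule F (Fin n → F)) : ℕ :=
  sInf {d | ∃ v ∈ C, v ≠ 0 ∧ hammingWt v = d}

/-- The `l`-th row distance of the convolutional code with generator matrix `G`. -/
noncomputable def rowDist {F : Type*} [Field F] {k n : ℕ}
    (G : Fin k → Fin n → Polynomial F) (l : ℕ) : ℕ :=
  sInf {d | ∃ α : Fin k → Polynomial F, α ≠ 0 ∧ (∀ i, (α i).natDegree ≤ l) ∧
    polyWeight (fun j => ∑ i, α i * G i j) = d}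

/-- The set of maximal (`k × k`) minors of a `k × n` polynomial matrix. -/
def maximalMinors {F : Type*} [Field F] {k n : ℕ} (G : Fin k → Fin n → Polynomial F) :
    Set (Polynomial F) :=
  {p | ∃ φ : Fin k ↪ Fin n, p = Matrix.det (Matrix.of fun i j => G i (φ j))}

/-- A generator matrix is basic when its maximal minors are coprime, i.e. generate the
unit ideal of `𝔽[z]`. -/
def IsBasic {F : Type*} [Field F] {k n : ℕ} (G : Fin k → Fin n → Polynomial F) : Prop :=
  Ideal.span (maximalMinors G) = ⊤

/-- The degree of the code: the highest degree of the maximal minors of a generator matrix. -/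
noncomputable def degCode {F : Type*} [Field F] {k n : ℕ}
    (G : Fin k → Fin n → Polynomial F) : ℕ :=
  sSup (Polynomial.natDegree '' maximalMinors G)

/-- The degree of the `i`-th row of a polynomial matrix. -/
noncomputable def rowDeg {F : Type*} [Field F] {k n : ℕ}
    (G : Fin k → Fin n → Polynomial F) (i : Fin k) : ℕ :=
  Finset.univ.sup fun j => (G i j).natDegree

/-- A generator matrix is reduced when the sum of its row degrees equals the maximal degree
of its maximal minors. -/
def IsReducedMatrix {F : Type*} [Field F] {k n : ℕ} (G : Fin k → Fin n → Polynomial F) : Prop :=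
  (∑ i, rowDeg G i) = degCode G

/-- A generator matrix is canonical when it is basic and reduced. -/
def IsCanonical {F : Type*} [Field F] {k n : ℕ} (G : Fin k → Fin n → Polynomial F) : Prop :=
  IsBasic G ∧ IsReducedMatrix G

/-!
Index rows and columns from `0`. Let `v ≠ 0` be supported in `[a, b]` with `v a, v b ≠ 0`. The
codeword `v 𝓕_k` has entry `v a * F₀` in column `a` and `v b * F₂` in column `b + 2`. On the
columns `a + 1, …, b + 1` strictly in between it is the product of `(v a, …, v b)` with the
tridiagonal Toeplitz matrix of determinant `d_{b - a}`, so it cannot vanish there either.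
-/

open Matrix
open scoped nonZeroDivisors

section Matrices

variable {R : Type*} [Zero R]

/-- The `n × n` tridiagonal Toeplitz matrix with `F₁` on the diagonal, `F₂` above it and `F₀`
below it. The determinant `d_m` is the one of size `m + 1`. -/
def tridiagonalToeplitz (F0 F1 F2 : R) (n : ℕ) : Matrix (Fin n) (Fin n) R :=
  of fun i j => if i = j then F1 else if (j : ℕ) = (i : ℕ) + 1 then F2
    else if (i : ℕ) = (j : ℕ) + 1 then F0 else 0

/-- The `n × (n + 2)` matrix whose `i`-th row is `(F₀, F₁, F₂)` shifted `i` places to the right.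
The matrix `𝓕_k` is the one with `n = k + 1` rows. -/
def slidingMatrix (F0 F1 F2 : R) (n : ℕ) : Matrix (Fin n) (Fin (n + 2)) R :=
  of fun i j => if (j : ℕ) = (i : ℕ) then F0 else if (j : ℕ) = (i : ℕ) + 1 then F1
    else if (j : ℕ) = (i : ℕ) + 2 then F2 else 0

theorem slidingMatrix_apply_of_lt (F0 F1 F2 : R) {n : ℕ} {i : Fin n} {j : Fin (n + 2)}
    (h : (j : ℕ) < i) : slidingMatrix F0 F1 F2 n i j = 0 := by
  rw [slidingMatrix, of_apply, if_neg (by omega), if_neg (by omega), if_neg (by omega)]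

theorem slidingMatrix_apply_of_add_two_lt (F0 F1 F2 : R) {n : ℕ} {i : Fin n} {j : Fin (n + 2)}
    (h : (i : ℕ) + 2 < j) : slidingMatrix F0 F1 F2 n i j = 0 := by
  rw [slidingMatrix, of_apply, if_neg (by omega), if_neg (by omega), if_neg (by omega)]

theorem tridiagonalToeplitz_submatrix_of_val_eq_add (F0 F1 F2 : R) {m n a : ℕ}
    {f : Fin m → Fin n} (hf : ∀ i, (f i : ℕ) = a + i) :
    (tridiagonalToeplitz F0 F1 F2 n).submatrix f f = tridiagonalToeplitz F0 F1 F2 m := by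
  ext i j
  simp only [tridiagonalToeplitz, submatrix_apply, of_apply, Fin.ext_iff, hf,
    Nat.add_left_cancel_iff, Nat.add_assoc]

theorem slidingMatrix_submatrix_succ_castSucc (F0 F1 F2 : R) (n : ℕ) :
    (slidingMatrix F0 F1 F2 n).submatrix id (fun j => j.castSucc.succ) =
      tridiagonalToeplitz F0 F1 F2 n := by
  ext i j
  simp only [slidingMatrix, tridiagonalToeplitz, submatrix_apply, of_apply, id, Fin.ext_iff,
    Fin.val_succ, Fin.val_castSucc]
  grind

end Matrices

section VecMul

variable {R : Type*} [NonUnitalNonAssocSemiring R]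

theorem comp_vecMul_submatrix_of_injective {ι κ μ ν : Type*} [Fintype ι] [Fintype μ]
    (A : Matrix μ ν R) {f : ι → μ} (g : κ → ν) {w : μ → R} (hf : f.Injective)
    (hw : ∀ i ∉ Set.range f, w i = 0) :
    (w ∘ f) ᵥ* A.submatrix f g = (w ᵥ* A) ∘ g :=
  funext fun j => Fintype.sum_of_injective f hf _ (fun i => w i * A i (g j))
    (fun i hi => by rw [hw i hi, zero_mul]) fun _ => rfl

variable {n : ℕ} {v : Fin n → R}

theorem vecMul_slidingMatrix_castAdd (F0 F1 F2 : R) {a : Fin n} (hv : ∀ i < a, v i = 0) :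
    (v ᵥ* slidingMatrix F0 F1 F2 n) (a.castAdd 2) = v a * F0 := by
  refine (Fintype.sum_eq_single a fun i hia => ?_).trans (by simp [slidingMatrix])
  rcases hia.lt_or_gt with hlt | hgt
  · exact mul_eq_zero_of_left (hv i hlt) _
  · exact mul_eq_zero_of_right _ (slidingMatrix_apply_of_lt F0 F1 F2 hgt)

theorem vecMul_slidingMatrix_addNat (F0 F1 F2 : R) {b : Fin n} (hv : ∀ i > b, v i = 0) :
    (v ᵥ* slidingMatrix F0 F1 F2 n) (b.addNat 2) = v b * F2 := by
  refine (Fintype.sum_eq_single b fun i hib => ?_).trans (by simp [slidingMatrix])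
  rcases hib.lt_or_gt with hlt | hgt
  · exact mul_eq_zero_of_right _
      (slidingMatrix_apply_of_add_two_lt F0 F1 F2 (Nat.add_lt_add_right hlt 2))
  · exact mul_eq_zero_of_left (hv i hgt) _

theorem vecMul_slidingMatrix_succ_castSucc (F0 F1 F2 : R) (j : Fin n) :
    (v ᵥ* slidingMatrix F0 F1 F2 n) j.castSucc.succ = (v ᵥ* tridiagonalToeplitz F0 F1 F2 n) j := by
  rw [← slidingMatrix_submatrix_succ_castSucc]
  rfl

end VecMul

section NonZeroDivisors

variable {R : Type*} [CommRing R] {F0 F1 F2 : R} {n : ℕ} {v : Fin n → R}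

theorem exists_vecMul_tridiagonalToeplitz_ne_zero {a b : Fin n} (ha : v a ≠ 0)
    (hv : ∀ i ∉ Set.Icc a b, v i = 0)
    (hd : (tridiagonalToeplitz F0 F1 F2 (b - a + 1)).det ∈ R⁰) :
    ∃ j ∈ Set.Icc a b, (v ᵥ* tridiagonalToeplitz F0 F1 F2 n) j ≠ 0 := by
  have hab : a ≤ b := by_contra fun h => ha (hv a fun hmem => h hmem.2)
  let f (i : Fin (b - a + 1)) : Fin n := ⟨a + i, by omega⟩
  have f_inj : f.Injective := fun i j hij => by simpa [f, Fin.ext_iff] using hij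
  have f_mem (i) : f i ∈ Set.Icc a b := by simp only [f, Set.mem_Icc, Fin.le_def]; omega
  have hv_range : ∀ i ∉ Set.range f, v i = 0 := fun i hi => hv i fun hmem =>
    hi ⟨⟨i - a, by grind⟩, by grind⟩
  by_contra! hzero
  have hwindow : (v ∘ f) ᵥ* tridiagonalToeplitz F0 F1 F2 (b - a + 1) = 0 := by
    rw [← tridiagonalToeplitz_submatrix_of_val_eq_add F0 F1 F2 (f := f) fun _ => rfl,
      comp_vecMul_submatrix_of_injective _ _ f_inj hv_range]
    exact funext fun i => hzero (f i) (f_mem i)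
  exact ha (congrFun (eq_zero_of_det_mem_nonZeroDivisors_of_vecMul_eq_zero hd hwindow) 0)

theorem sliding_matrix_MDS_general [DecidableEq R] (h0 : F0 ∈ R⁰) (h2 : F2 ∈ R⁰)
    (hd : ∀ m < n, (tridiagonalToeplitz F0 F1 F2 (m + 1)).det ∈ R⁰) (hv : v ≠ 0) :
    3 ≤ hammingNorm (v ᵥ* slidingMatrix F0 F1 F2 n) := by
  have hsupp : {i | v i ≠ 0}.Nonempty := Function.ne_iff.mp hv
  obtain ⟨a, ha, ha_min⟩ := wellFounded_lt.has_min _ hsupp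
  obtain ⟨b, hb, hb_max⟩ := wellFounded_gt.has_min _ hsupp
  have hv_lt : ∀ i < a, v i = 0 := fun i hi => by_contra fun h => ha_min i h hi
  have hv_gt : ∀ i > b, v i = 0 := fun i hi => by_contra fun h => hb_max i h hi
  have hfirst : (v ᵥ* slidingMatrix F0 F1 F2 n) (a.castAdd 2) ≠ 0 := by
    rwa [vecMul_slidingMatrix_castAdd F0 F1 F2 hv_lt, Ne,
      mul_right_mem_nonZeroDivisors_eq_zero_iff h0]
  have hlast : (v ᵥ* slidingMatrix F0 F1 F2 n) (b.addNat 2) ≠ 0 := by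
    rwa [vecMul_slidingMatrix_addNat F0 F1 F2 hv_gt, Ne,
      mul_right_mem_nonZeroDivisors_eq_zero_iff h2]
  obtain ⟨j, ⟨haj, hjb⟩, hmiddle⟩ := exists_vecMul_tridiagonalToeplitz_ne_zero
    ha (fun i hi => by grind) (hd (b - a) (by omega))
  rw [← vecMul_slidingMatrix_succ_castSucc] at hmiddle
  have hlt_middle : a.castAdd 2 < j.castSucc.succ := Nat.lt_succ_of_le haj
  have hmiddle_lt : j.castSucc.succ < b.addNat 2 := Nat.lt_succ_of_le (Nat.succ_le_succ hjb)
  exact Finset.two_lt_card_iff.mpr ⟨a.castAdd 2, j.castSucc.succ, b.addNat 2,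
    by simpa using hfirst, by simpa using hmiddle, by simpa using hlast,
    hlt_middle.ne, (hlt_middle.trans hmiddle_lt).ne, hmiddle_lt.ne⟩

end NonZeroDivisors

theorem hammingWt_eq_hammingNorm {F : Type*} [Field F] [DecidableEq F] {n : ℕ} (v : Fin n → F) :
    hammingWt v = hammingNorm v := by
  simp [hammingWt, hammingNorm, Set.ncard_eq_toFinset_card']

/-- If `F₀ ≠ 0`, `F₂ ≠ 0` and all the tridiagonal Toeplitz determinants
`d_m`, `0 ≤ m ≤ k`, are nonzero, then every nonzero linear combination of the rows of the
`(k+1) × (k+3)` sliding matrix `𝓕_k` (whose `i`-th row is `(0,…,0,F₀,F₁,F₂,0,…,0)` with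
`F₀` in column `i`) has Hamming weight at least `3`; i.e. `𝓕_k` generates an MDS block code
of length `k+3` and dimension `k+1`. -/
theorem sliding_matrix_MDS {F : Type*} [Field F] (F0 F1 F2 : F) (h0 : F0 ≠ 0) (h2 : F2 ≠ 0)
    (k : ℕ)
    (hd : ∀ m ≤ k, Matrix.det (Matrix.of fun i j : Fin (m + 1) =>
        if i = j then F1 else if (j : ℕ) = (i : ℕ) + 1 then F2
          else if (i : ℕ) = (j : ℕ) + 1 then F0 else 0) ≠ 0) :
    ∀ v : Fin (k + 1) → F, v ≠ 0 →
      3 ≤ hammingWt (fun j : Fin (k + 3) => ∑ i : Fin (k + 1), v i *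
        (if (j : ℕ) = (i : ℕ) then F0 else if (j : ℕ) = (i : ℕ) + 1 then F1
          else if (j : ℕ) = (i : ℕ) + 2 then F2 else 0)) := by
  classical
  intro v hv
  rw [hammingWt_eq_hammingNorm]
  exact sliding_matrix_MDS_general (mem_nonZeroDivisors_of_ne_zero h0)
    (mem_nonZeroDivisors_of_ne_zero h2)
    (fun m hm => mem_nonZeroDivisors_of_ne_zero (hd m (Nat.le_of_lt_succ hm))) hv
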